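/- Let Γ be a finite simple graph with at least two vertices such that the outer automorphism group Out(A_Γ) is finite. Then the centre of the right-angled Artin group A_Γ is trivial. -/

import Mathlib

open scoped commutatorElement

/-- The set of relators of a right-angled Artin group: commutators of adjacent vertices. -/
def raagRels {V : Type*} (Γ : SimpleGraph V) : Set (FreeGroup V) :=
  {r | ∃ v w : V, Γ.Adj v w ∧ r = ⁅FreeGroup.of v, FreeGroup.of w⁆}

/-- The right-angled Artin group of a simple graph. -/
abbrev RAAG {V : Type*} (Γ : SimpleGraph V) : Type _ := PresentedGroup (raagRels Γ)

instance conjRangeNormal (G : Type*) [Group G] :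
    ((MulAut.conj : G →* MulAut G).range).Normal := by
  constructor
  rintro - ⟨g, rfl⟩ φ
  refine ⟨φ g, ?_⟩
  ext x
  simp [MulAut.conj_apply, mul_assoc]

/-- The outer automorphism group of a group: the quotient of the automorphism group
by the inner automorphisms. -/
def Out (G : Type*) [Group G] : Type _ :=
  MulAut G ⧸ (MulAut.conj : G →* MulAut G).range

instance (G : Type*) [Group G] : Group (Out G) :=
  QuotientGroup.Quotient.group _

/-!
Suppose first that no vertex of `Γ` is adjacent to all others, and let `z` be central. For
non-adjacent `v ≠ w`, the group `A_Γ` embeds in `F ⋊ A_Γ`, where `F` is the free group on the set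
`A_Γ` with `A_Γ` acting by conjugation of the basis: send `v` to the basis element `v` of `F` and
every other generator to its copy in `A_Γ`. The `F`-component of `z` commutes with the basis
element `v` and, being fixed by `w`, also with the distinct basis element `w v w⁻¹`; hence it is
trivial, and `z` is unchanged by the retraction killing `v`. Killing the finitely many vertices
occurring in `z` one after the other gives `z = 1`.

If instead some `v` is adjacent to all other vertices, then `v` is central. For any `w ≠ v` the
transvections `w ↦ w vⁿ` have distinct images in `Out A_Γ`, since inner automorphisms are invisible
in the abelianization.
-/

section FreeGroup

variable {α : Type*}

theorem eq_of_isConj_freeGroup_of {a b : α} (h : IsConj (FreeGroup.of a) (FreeGroup.of b)) :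
    a = b := by
  have hab : Abelianization.of (FreeGroup.of a) = Abelianization.of (FreeGroup.of b) :=
    isConj_iff_eq.mp (Abelianization.of.map_isConj h)
  exact FreeAbelianGroup.of_injective hab

theorem toWord_of_mul_of_head_ne [DecidableEq α] {a : α} {f : FreeGroup α}
    (hf : ∀ p ∈ f.toWord.head?, p.1 ≠ a) :
    (FreeGroup.of a * f).toWord = (a, true) :: f.toWord := by
  have hred : FreeGroup.IsReduced ((a, true) :: f.toWord) :=
    List.isChain_cons.mpr
      ⟨fun p hp hap => absurd hap.symm (hf p hp), FreeGroup.isReduced_toWord⟩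
  rw [FreeGroup.toWord_mul, FreeGroup.toWord_of]
  exact hred.reduce_eq

theorem freeGroup_eq_one_of_commute_of_head_ne [DecidableEq α] {a : α} {f : FreeGroup α}
    (hcomm : Commute (FreeGroup.of a) f) (hf : ∀ p ∈ f.toWord.head?, p.1 ≠ a) : f = 1 := by
  have hsub : ((a, true) :: f.toWord).Sublist (f.toWord ++ [(a, true)]) := by
    rw [← toWord_of_mul_of_head_ne hf, hcomm.eq, ← FreeGroup.toWord_of]
    exact FreeGroup.toWord_mul_sublist f (FreeGroup.of a)
  have hword : (a, true) :: f.toWord = f.toWord ++ [(a, true)] := hsub.eq_of_length (by simp)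
  rw [← FreeGroup.toWord_eq_nil_iff]
  rcases hw : f.toWord with _ | ⟨p, L⟩
  · rfl
  · have hp : p = (a, true) := by
      rw [hw] at hword
      exact (List.cons.inj hword).1.symm
    exact absurd (congrArg Prod.fst hp) (hf p (by simp [hw]))

theorem freeGroup_eq_one_of_commute_of_commute {a b : α} (hab : a ≠ b) {f : FreeGroup α}
    (ha : Commute (FreeGroup.of a) f) (hb : Commute (FreeGroup.of b) f) : f = 1 := by
  classical
  by_cases h : ∀ p ∈ f.toWord.head?, p.1 ≠ a
  · exact freeGroup_eq_one_of_commute_of_head_ne ha h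
  · push Not at h
    obtain ⟨p, hp, rfl⟩ := h
    refine freeGroup_eq_one_of_commute_of_head_ne hb fun q hq => ?_
    rwa [← Option.mem_unique hp hq]

end FreeGroup

section PermFreeGroup

/-- The action of the permutations of a set on the free group on that set, by permuting the
basis. -/
def permFreeGroup (α : Type*) : Equiv.Perm α →* MulAut (FreeGroup α) where
  toFun := FreeGroup.freeGroupCongr
  map_one' := FreeGroup.freeGroupCongr_refl
  map_mul' σ τ := (FreeGroup.freeGroupCongr_trans τ σ).symm

@[simp]
theorem permFreeGroup_of {α : Type*} (σ : Equiv.Perm α) (a : α) :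
    permFreeGroup α σ (FreeGroup.of a) = FreeGroup.of (σ a) :=
  FreeGroup.map.of

theorem left_eq_one_of_commute_of_commute {α G : Type*} [Group G] {φ : G →* Equiv.Perm α}
    {s : FreeGroup α ⋊[(permFreeGroup α).comp φ] G} {a : α} {g : G} (hga : φ g a ≠ a)
    (ha : Commute (SemidirectProduct.inl (FreeGroup.of a)) s)
    (hg : Commute (SemidirectProduct.inr g) s) : s.left = 1 := by
  have ha_left : FreeGroup.of a * s.left = s.left * FreeGroup.of (φ s.right a) := by
    simpa using congrArg SemidirectProduct.left ha.eq
  have hg_left : permFreeGroup α (φ g) s.left = s.left := by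
    simpa using congrArg SemidirectProduct.left hg.eq
  have hfix : φ s.right a = a :=
    eq_of_isConj_freeGroup_of (isConj_iff.mpr ⟨s.left, by rw [← ha_left, mul_inv_cancel_right]⟩)
  have hcomm : Commute (FreeGroup.of a) s.left := by rwa [hfix] at ha_left
  have hcomm_smul : Commute (FreeGroup.of (φ g a)) s.left := by
    simpa [hg_left] using hcomm.map (permFreeGroup α (φ g))
  exact freeGroup_eq_one_of_commute_of_commute hga hcomm_smul hcomm

variable (G : Type*) [Group G]

/-- The conjugation action of a group on itself, as a homomorphism to the permutations of its
underlying set. -/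
def conjPerm : G →* Equiv.Perm G :=
  (MulAut.toPerm G).comp MulAut.conj

variable {G} in
@[simp]
theorem conjPerm_apply (g x : G) : conjPerm G g x = g * x * g⁻¹ :=
  rfl

/-- The semidirect product `F ⋊ G`, where `F` is the free group on the underlying set of `G` and
`G` permutes the basis of `F` by conjugation. -/
abbrev FreeConjProduct : Type _ :=
  FreeGroup G ⋊[(permFreeGroup G).comp (conjPerm G)] G

/-- The evaluation homomorphism `F ⋊ G → G` which is the identity on both the basis of `F` and
on `G`. -/
def FreeConjProduct.eval : FreeConjProduct G →* G :=
  SemidirectProduct.lift (FreeGroup.lift id) (MonoidHom.id G) fun g => by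
    ext x
    simp

end PermFreeGroup

section Out

open scoped IsMulCommutative

variable {G : Type*} [Group G]

/-- The automorphism `x ↦ x * f x` attached to a homomorphism `f` into the centre which vanishes on
its own image. -/
def centralTransvection (f : G →* Subgroup.center G) (hf : ∀ x, f (f x) = 1) : MulAut G where
  toFun x := x * f x
  invFun x := x * (f x)⁻¹
  left_inv x := by simp [hf]
  right_inv x := by simp [hf]
  map_mul' x y := by
    have hcomm : y * f x = f x * y := Subgroup.mem_center_iff.mp (f x).2 y
    simp only [map_mul, Subgroup.coe_mul, mul_assoc]
    rw [← mul_assoc y, hcomm, mul_assoc]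

@[simp]
theorem centralTransvection_apply (f : G →* Subgroup.center G) (hf : ∀ x, f (f x) = 1) (x : G) :
    centralTransvection f hf x = x * f x :=
  rfl

theorem map_eq_map_of_out_mk_eq {A : Type*} [CommGroup A] (χ : G →* A) {σ τ : MulAut G}
    (h : (QuotientGroup.mk σ : Out G) = QuotientGroup.mk τ) (x : G) : χ (σ x) = χ (τ x) := by
  obtain ⟨g, hg⟩ := QuotientGroup.eq.mp h
  have hτ : τ = σ * MulAut.conj g := by rw [hg, mul_inv_cancel_left]
  simp [hτ, mul_right_comm _ _ (χ (σ g))⁻¹]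

theorem infinite_out_of_not_isOfFinOrder_map {A : Type*} [CommGroup A] (f : G →* Subgroup.center G)
    (hf : ∀ x, f (f x) = 1) (χ : G →* A) {x : G} (hx : ¬ IsOfFinOrder (χ (f x))) :
    Infinite (Out G) := by
  have hf_zpow (n : ℤ) (y : G) : (f ^ n) ((f ^ n) y) = 1 := by simp [hf]
  refine Infinite.of_injective
    (fun n : ℤ => (QuotientGroup.mk (centralTransvection (f ^ n) (hf_zpow n)) : Out G))
    fun m n hmn => injective_zpow_iff_not_isOfFinOrder.mpr hx ?_
  simpa using map_eq_map_of_out_mk_eq χ hmn x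

end Out

namespace RAAG

variable {V : Type*} {Γ : SimpleGraph V}

variable (Γ) in
/-- The generator of a right-angled Artin group attached to a vertex. -/
abbrev of (v : V) : RAAG Γ :=
  PresentedGroup.of v

/-- The universal property: a map on vertices sending adjacent vertices to commuting elements
extends to the right-angled Artin group. -/
def lift {G : Type*} [Group G] (f : V → G) (hf : ∀ v w, Γ.Adj v w → Commute (f v) (f w)) :
    RAAG Γ →* G :=
  PresentedGroup.toGroup (f := f) <| by
    rintro - ⟨v, w, hvw, rfl⟩
    simpa [map_commutatorElement, commutatorElement_eq_one_iff_commute] using hf v w hvw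

@[simp]
theorem lift_of {G : Type*} [Group G] (f : V → G)
    (hf : ∀ v w, Γ.Adj v w → Commute (f v) (f w)) (v : V) : lift f hf (of Γ v) = f v :=
  PresentedGroup.toGroup.of _

theorem commute_of_adj {v w : V} (h : Γ.Adj v w) : Commute (of Γ v) (of Γ w) :=
  commutatorElement_eq_one_iff_commute.mp
    (PresentedGroup.one_of_mem (rels := raagRels Γ) ⟨v, w, h, rfl⟩)

theorem not_commute_of_not_adj {v w : V} (hvw : v ≠ w) (h : ¬ Γ.Adj v w) :
    ¬ Commute (of Γ v) (of Γ w) := by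
  classical
  intro hcomm
  let f : V → Equiv.Perm (Fin 3) := fun u =>
    if u = v then Equiv.swap 0 1 else if u = w then Equiv.swap 1 2 else 1
  have hf (a b : V) (hab : Γ.Adj a b) : Commute (f a) (f b) := by
    have hba := hab.symm
    simp only [f]
    split_ifs <;> simp_all
  have hswap : Commute (Equiv.swap 0 1 : Equiv.Perm (Fin 3)) (Equiv.swap 1 2) := by
    simpa [f, hvw.symm] using hcomm.map (lift f hf)
  exact absurd hswap.eq (by decide)

theorem of_mem_center {v : V} (hv : Γ.IsUniversal v) :
    of Γ v ∈ Subgroup.center (RAAG Γ) := by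
  refine Subgroup.mem_center_iff.mpr fun x => Subgroup.mem_centralizer_singleton_iff.mp ?_
  refine PresentedGroup.generated_by _ _ (fun u => ?_) x
  refine Subgroup.mem_centralizer_singleton_iff.mpr ?_
  obtain rfl | hvu := eq_or_ne v u
  · rfl
  · exact (commute_of_adj (hv hvu)).eq.symm

section Kill

open Classical in
/-- The retraction of a right-angled Artin group which sends the vertices in `S` to `1` and fixes
the others. -/
noncomputable def kill (S : Set V) : RAAG Γ →* RAAG Γ :=
  lift (fun u => if u ∈ S then 1 else of Γ u) fun v w hvw => by
    split_ifs <;> simp [commute_of_adj hvw]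

open Classical in
@[simp]
theorem kill_of (S : Set V) (v : V) : kill S (of Γ v) = if v ∈ S then 1 else of Γ v :=
  lift_of _ _ v

theorem kill_empty : kill (∅ : Set V) = MonoidHom.id (RAAG Γ) := by
  ext v
  simp

theorem kill_union (S T : Set V) : kill (Γ := Γ) (S ∪ T) = (kill S).comp (kill T) := by
  ext v
  by_cases hS : v ∈ S <;> by_cases hT : v ∈ T <;> simp [hS, hT]

theorem exists_finite_kill_eq_one (x : RAAG Γ) : ∃ S : Set V, S.Finite ∧ kill S x = 1 := by
  have hx : x ∈ Subgroup.closure (Set.range (of Γ)) := by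
    rw [PresentedGroup.closure_range_of]
    trivial
  induction hx using Subgroup.closure_induction with
  | mem x hx =>
    obtain ⟨v, rfl⟩ := hx
    exact ⟨{v}, Set.finite_singleton v, by simp⟩
  | one => exact ⟨∅, Set.finite_empty, map_one _⟩
  | mul x y _ _ ihx ihy =>
    obtain ⟨S, hS, hSx⟩ := ihx
    obtain ⟨T, hT, hTy⟩ := ihy
    have hx : kill (S ∪ T) x = 1 := by rw [Set.union_comm, kill_union]; simp [hSx]
    have hy : kill (S ∪ T) y = 1 := by rw [kill_union]; simp [hTy]
    exact ⟨S ∪ T, hS.union hT, by rw [map_mul, hx, hy, mul_one]⟩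
  | inv x _ ih =>
    obtain ⟨S, hS, hSx⟩ := ih
    exact ⟨S, hS, by rw [map_inv, hSx, inv_one]⟩

end Kill

section FreeConjEmbedding

open Classical in
/-- The homomorphism `A_Γ → F ⋊ A_Γ` which sends the vertex `v` to the corresponding basis element
of `F` and every other vertex to its copy in `A_Γ`. -/
noncomputable def toFreeConjProduct (v : V) : RAAG Γ →* FreeConjProduct (RAAG Γ) :=
  lift (fun u => if u = v then SemidirectProduct.inl (FreeGroup.of (of Γ v))
    else SemidirectProduct.inr (of Γ u)) fun a b hab => by
    have hcomm (u : V) (hvu : Γ.Adj v u) :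
        Commute (SemidirectProduct.inl (FreeGroup.of (of Γ v)) : FreeConjProduct (RAAG Γ))
          (SemidirectProduct.inr (of Γ u)) := by
      ext <;> simp [← (commute_of_adj hvu).eq]
    split_ifs with ha hb hb
    · exact Commute.refl _
    · exact hcomm b (ha ▸ hab)
    · exact (hcomm a (hb ▸ hab.symm)).symm
    · exact (commute_of_adj hab).map SemidirectProduct.inr

theorem toFreeConjProduct_of_self (v : V) :
    toFreeConjProduct v (of Γ v) = SemidirectProduct.inl (FreeGroup.of (of Γ v)) := by
  simp [toFreeConjProduct]

theorem toFreeConjProduct_of_ne {u v : V} (huv : u ≠ v) :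
    toFreeConjProduct v (of Γ u) = SemidirectProduct.inr (of Γ u) := by
  simp [toFreeConjProduct, huv]

theorem eval_toFreeConjProduct (v : V) (x : RAAG Γ) :
    FreeConjProduct.eval (RAAG Γ) (toFreeConjProduct v x) = x := by
  suffices (FreeConjProduct.eval (RAAG Γ)).comp (toFreeConjProduct v) = MonoidHom.id _ from
    DFunLike.congr_fun this x
  ext u
  by_cases huv : u = v <;> simp [toFreeConjProduct, FreeConjProduct.eval, huv]

theorem toFreeConjProduct_right (v : V) (x : RAAG Γ) :
    (toFreeConjProduct v x).right = kill {v} x := by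
  suffices SemidirectProduct.rightHom.comp (toFreeConjProduct v) = kill (Γ := Γ) {v} from
    DFunLike.congr_fun this x
  ext u
  by_cases huv : u = v <;> simp [toFreeConjProduct, huv]

theorem kill_eq_self_of_left_eq_one {v : V} {x : RAAG Γ}
    (hx : (toFreeConjProduct v x).left = 1) : kill {v} x = x := by
  calc
    kill {v} x = FreeConjProduct.eval (RAAG Γ) (SemidirectProduct.inr (kill {v} x)) := by
      simp [FreeConjProduct.eval]
    _ = FreeConjProduct.eval (RAAG Γ) (toFreeConjProduct v x) := by
      rw [← SemidirectProduct.inl_left_mul_inr_right (toFreeConjProduct v x), hx, map_one, one_mul,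
        toFreeConjProduct_right]
    _ = x := eval_toFreeConjProduct v x

end FreeConjEmbedding

theorem kill_eq_self_of_mem_center {v : V} (hv : ¬ Γ.IsUniversal v) {z : RAAG Γ}
    (hz : z ∈ Subgroup.center (RAAG Γ)) : kill {v} z = z := by
  obtain ⟨w, hvw, hadj⟩ : ∃ w, v ≠ w ∧ ¬ Γ.Adj v w := by
    simpa [SimpleGraph.IsUniversal] using hv
  have hcomm (x : RAAG Γ) : Commute (toFreeConjProduct v x) (toFreeConjProduct v z) :=
    Commute.map (Subgroup.mem_center_iff.mp hz x) (toFreeConjProduct v)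
  have hmoved : conjPerm (RAAG Γ) (of Γ w) (of Γ v) ≠ of Γ v := fun h =>
    not_commute_of_not_adj hvw hadj (mul_inv_eq_iff_eq_mul.mp h).symm
  refine kill_eq_self_of_left_eq_one (left_eq_one_of_commute_of_commute hmoved ?_ ?_)
  · rw [← toFreeConjProduct_of_self]
    exact hcomm (of Γ v)
  · rw [← toFreeConjProduct_of_ne hvw.symm]
    exact hcomm (of Γ w)

theorem center_eq_bot (hΓ : ∀ v, ¬ Γ.IsUniversal v) : Subgroup.center (RAAG Γ) = ⊥ := by
  refine (Subgroup.eq_bot_iff_forall _).mpr fun z hz => ?_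
  have hkill (S : Set V) (hS : S.Finite) : kill S z = z := by
    induction S, hS using Set.Finite.induction_on with
    | empty => rw [kill_empty, MonoidHom.id_apply]
    | @insert v S _ _ ih =>
      rw [Set.insert_eq, kill_union, MonoidHom.comp_apply, ih,
        kill_eq_self_of_mem_center (hΓ v) hz]
  obtain ⟨S, hS, hSz⟩ := exists_finite_kill_eq_one z
  rw [← hkill S hS, hSz]

section Exponent

open Classical in
/-- The exponent sum of a vertex, as a homomorphism to the infinite cyclic group. -/
noncomputable def exponent (v : V) : RAAG Γ →* Multiplicative ℤ :=
  lift (Pi.mulSingle v (Multiplicative.ofAdd 1)) fun _ _ _ => Commute.all _ _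

theorem exponent_of_self (v : V) : exponent v (of Γ v) = Multiplicative.ofAdd 1 := by
  simp [exponent]

theorem exponent_of_ne {u v : V} (huv : u ≠ v) : exponent v (of Γ u) = 1 := by
  simp [exponent, huv]

theorem infinite_out_of_isUniversal [Nontrivial V] {v : V} (hv : Γ.IsUniversal v) :
    Infinite (Out (RAAG Γ)) := by
  obtain ⟨w, hwv⟩ := exists_ne v
  let f : RAAG Γ →* Subgroup.center (RAAG Γ) :=
    (zpowersHom _ ⟨of Γ v, of_mem_center hv⟩).comp (exponent w)
  have hf (x : RAAG Γ) : f (f x) = 1 := by simp [f, zpowersHom_apply, exponent_of_ne hwv.symm]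
  refine infinite_out_of_not_isOfFinOrder_map f hf (exponent v) (x := of Γ w) ?_
  simp [f, zpowersHom_apply, exponent_of_self, isOfFinOrder_iff_pow_eq_one]

end Exponent

end RAAG

theorem center_raag_trivial_of_out_finite_general {V : Type*} [Nontrivial V] (Γ : SimpleGraph V)
    (h : Finite (Out (RAAG Γ))) : Subgroup.center (RAAG Γ) = ⊥ := by
  refine RAAG.center_eq_bot fun v hv => ?_
  have := RAAG.infinite_out_of_isUniversal hv
  exact not_finite (Out (RAAG Γ))

theorem center_raag_trivial_of_out_finite {V : Type} [Fintype V] (Γ : SimpleGraph V)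
    (hV : 2 ≤ Fintype.card V) (h : Finite (Out (RAAG Γ))) :
    Subgroup.center (RAAG Γ) = ⊥ := by
  have : Nontrivial V := Fintype.one_lt_card_iff_nontrivial.mp hV
  exact center_raag_trivial_of_out_finite_general Γ h
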